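/- Let X be an infinite set and let G be a subgroup of Sym(X) fully containing FAlt(X). If no element g ∈ G has an infinite orbit (i.e. every orbit of every element of G is finite), then G has the R_∞ property. -/

import Mathlib

/-- `FAlt X`: the subgroup of `Equiv.Perm X` generated by all 3-cycles, i.e. by those
permutations whose support has exactly 3 elements. -/
def FAlt (X : Type*) : Subgroup (Equiv.Perm X) :=
  Subgroup.closure {σ : Equiv.Perm X | {x | σ x ≠ x}.ncard = 3}

/-- Twisted conjugacy: `a` and `b` are `φ`-twisted conjugate if `(φ x)⁻¹ * a * x = b`
for some `x`. -/
def TwistedConj {G : Type*} [Group G] (φ : G ≃* G) (a b : G) : Prop :=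
  ∃ x : G, (φ x)⁻¹ * a * x = b

/-- A group has the `R∞` property if every automorphism has infinitely many twisted
conjugacy classes. -/
def RInfinity (G : Type*) [Group G] : Prop :=
  ∀ φ : G ≃* G, Infinite (Quot (TwistedConj φ))

/-!
The product of two 3-cycles has order 1, 2, 3 or 5, and it has order 2 exactly when they are
distinct and share an arc `u ↦ v`. Hence any commutator of a 3-cycle with another permutation has
trivial 30th power, and among the elements of order 3 in `G` this property singles out the 3-cycles.
So an automorphism `φ` of `G` permutes the 3-cycles and preserves the sharing of arcs; this
transports arcs, then their heads, and shows that `φ` is conjugation by a permutation `ρ` of `X`.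

Now `a ↦ ρ⁻¹ a` turns the `φ`-twisted classes into the `G`-conjugacy classes on the coset `ρ⁻¹ G`.
Since the elements of `G` have finite orbits, none of them maps a subset of `X` onto a proper subset
of it, so the fixed-point sets of two conjugate elements are never strictly nested. Multiplying
`ρ⁻¹` repeatedly by 3-cycles gives elements of the coset whose fixed-point sets form an infinite
strictly monotone chain, hence infinitely many classes.
-/

open Equiv Function
open scoped commutatorElement

section ThreeCycle

variable {X : Type*}

/-- A permutation moving exactly three points; `Equiv.Perm.IsThreeCycle` is the same notion on
finite types only. -/
def IsThreeCycle (p : Perm X) : Prop :=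
  {x | p x ≠ x}.ncard = 3

/-- The permutation `a ↦ b ↦ c ↦ a`, provided that `a`, `b`, `c` are distinct. -/
def threeCycle [DecidableEq X] (a b c : X) : Perm X :=
  swap a b * swap b c

/-- Two permutations share the arc `(u, v)` if both map `u` to `v ≠ u`. -/
def SharesArc (p q : Perm X) : Prop :=
  ∃ u v, u ≠ v ∧ p u = v ∧ q u = v

theorem threeCycle_apply [DecidableEq X] {a b c : X} (hab : a ≠ b) (hac : a ≠ c) (hbc : b ≠ c)
    (x : X) : threeCycle a b c x =
      if x = a then b else if x = b then c else if x = c then a else x := by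
  simp only [threeCycle, Perm.mul_apply, swap_apply_def]
  grind

theorem isThreeCycle_threeCycle [DecidableEq X] {a b c : X} (hab : a ≠ b) (hac : a ≠ c)
    (hbc : b ≠ c) : IsThreeCycle (threeCycle a b c) := by
  refine Set.ncard_eq_three.2 ⟨a, b, c, hab, hac, hbc, ?_⟩
  ext x
  simp only [threeCycle_apply hab hac hbc, Set.mem_ofPred_eq, Set.mem_insert_iff,
    Set.mem_singleton_iff]
  grind

theorem threeCycle_mul_threeCycle_pow_five [DecidableEq X] {a b c d e : X}
    (h : [a, d, e, b, c].Nodup) : (threeCycle a b c * threeCycle a d e) ^ 5 = 1 := by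
  have : threeCycle a b c * threeCycle a d e = [a, d, e, b, c].formPerm := by
    ext x
    simp only [threeCycle, List.formPerm_cons_cons, List.formPerm_singleton, mul_one,
      Perm.mul_apply, swap_apply_def]
    grind
  rw [this]
  exact List.formPerm_pow_length_eq_one_of_nodup _ h

namespace IsThreeCycle

variable {p q r : Perm X}

theorem exists_apply_ne (hp : IsThreeCycle p) : ∃ x, p x ≠ x := by
  obtain ⟨a, b, c, -, -, -, hs⟩ := Set.ncard_eq_three.1 hp
  exact ⟨a, hs.ge (Set.mem_insert a _)⟩

theorem exists_eq_threeCycle [DecidableEq X] (hp : IsThreeCycle p) {a b : X} (hab : p a = b)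
    (hne : a ≠ b) : ∃ c, a ≠ c ∧ b ≠ c ∧ p = threeCycle a b c := by
  have hinj (x y : X) (h : p x = p y) : x = y := p.injective h
  have hpab : {a, b} ⊆ {x | p x ≠ x} := by
    rintro x (rfl | rfl) <;> simp only [Set.mem_ofPred_eq] <;> grind
  have hcard : ({x | p x ≠ x} \ {a, b}).ncard = 1 := by
    rw [Set.ncard_sdiff hpab, hp, Set.ncard_pair hne]
  obtain ⟨c, hc⟩ := Set.ncard_eq_one.1 hcard
  have moved (x : X) : (p x ≠ x ∧ x ≠ a ∧ x ≠ b) ↔ x = c := by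
    simpa using Set.ext_iff.1 hc x
  obtain ⟨hpc, hca, hcb⟩ := (moved c).2 rfl
  have fixed (x : X) : p x = x ∨ x = a ∨ x = b ∨ x = c := by
    have := moved x
    tauto
  have hpc' : p c = a := by
    have := fixed (p c)
    grind
  have hpb : p b = c := by
    have := fixed (p b)
    grind
  refine ⟨c, hca.symm, hcb.symm, Equiv.ext fun x => ?_⟩
  rw [threeCycle_apply hne hca.symm hcb.symm]
  grind

theorem apply_apply_apply (hp : IsThreeCycle p) (x : X) : p (p (p x)) = x := by
  classical
  by_cases hx : p x = x
  · simp only [hx]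
  · obtain ⟨c, hac, hbc, h⟩ := hp.exists_eq_threeCycle rfl (Ne.symm hx)
    have := threeCycle_apply (Ne.symm hx) hac hbc
    grind

theorem pow_three (hp : IsThreeCycle p) : p ^ 3 = 1 := by
  ext x
  simpa [pow_succ] using hp.apply_apply_apply x

theorem ne_one (hp : IsThreeCycle p) : p ≠ 1 := by
  rintro rfl
  simpa using hp.exists_apply_ne

theorem mem_FAlt (hp : IsThreeCycle p) : p ∈ FAlt X :=
  Subgroup.subset_closure hp

theorem conj (hp : IsThreeCycle p) (h : Perm X) : IsThreeCycle (h * p * h⁻¹) := by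
  have : {x | (h * p * h⁻¹) x ≠ x} = h '' {x | p x ≠ x} := by
    ext x
    simp [Equiv.image_eq_preimage_symm, Equiv.eq_symm_apply, Perm.inv_def]
  rw [IsThreeCycle, this, Set.ncard_image_of_injective _ h.injective, hp]

theorem inv (hp : IsThreeCycle p) : IsThreeCycle p⁻¹ := by
  have : {x | p⁻¹ x ≠ x} = {x | p x ≠ x} := by
    ext x
    rw [Set.mem_ofPred_eq, Set.mem_ofPred_eq, Ne, Perm.inv_eq_iff_eq, eq_comm]
  rwa [IsThreeCycle, this]

theorem mul_sq_eq_one (hp : IsThreeCycle p) (hq : IsThreeCycle q) (hpq : SharesArc p q)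
    (hne : p ≠ q) : (p * q) ^ 2 = 1 := by
  classical
  obtain ⟨u, v, huv, hpu, hqu⟩ := hpq
  obtain ⟨w, huw, hvw, rfl⟩ := hp.exists_eq_threeCycle hpu huv
  obtain ⟨w', huw', hvw', rfl⟩ := hq.exists_eq_threeCycle hqu huv
  ext x
  simp only [sq, Perm.mul_apply, threeCycle_apply huv huw hvw, threeCycle_apply huv huw' hvw',
    Perm.one_apply]
  grind

theorem mul_ne_one (hp : IsThreeCycle p) (hpq : SharesArc p q) : p * q ≠ 1 := by
  rintro h
  obtain ⟨u, v, huv, hpu, hqu⟩ := hpq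
  have : p (q u) = u := congr($h u)
  have := hp.apply_apply_apply u
  grind

theorem mul_pow_three_or_five (hp : IsThreeCycle p) (hq : IsThreeCycle q)
    (hpq : ¬ SharesArc p q) : (p * q) ^ 3 = 1 ∨ (p * q) ^ 5 = 1 := by
  classical
  by_cases hdisj : p.Disjoint q
  · left
    rw [hdisj.commute.mul_pow, hp.pow_three, hq.pow_three, one_mul]
  obtain ⟨a, hpa, hqa⟩ : ∃ a, p a ≠ a ∧ q a ≠ a := by
    simpa [Perm.Disjoint] using hdisj
  obtain ⟨b, hb⟩ : ∃ b, p a = b := ⟨_, rfl⟩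
  obtain ⟨d, hd⟩ : ∃ d, q a = d := ⟨_, rfl⟩
  obtain ⟨c, hac, hbc, rfl⟩ := hp.exists_eq_threeCycle hb (hb ▸ hpa.symm)
  obtain ⟨e, hae, hde, rfl⟩ := hq.exists_eq_threeCycle hd (hd ▸ hqa.symm)
  have hab : a ≠ b := hb ▸ hpa.symm
  have had : a ≠ d := hd ▸ hqa.symm
  have hp' := threeCycle_apply hab hac hbc
  have hq' := threeCycle_apply had hae hde
  have hbd : b ≠ d := by
    rintro rfl
    exact hpq ⟨a, b, hab, hb, hd⟩
  have hce : c ≠ e := by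
    rintro rfl
    exact hpq ⟨c, a, hac.symm, by grind, by grind⟩
  by_cases h : b = e ∨ c = d
  · left
    ext x
    simp only [pow_succ, pow_zero, one_mul, Perm.mul_apply, hp', hq', Perm.one_apply]
    grind
  · exact .inr (threeCycle_mul_threeCycle_pow_five (by grind))

theorem sharesArc_iff (hp : IsThreeCycle p) (hq : IsThreeCycle q) :
    SharesArc p q ↔ p = q ∨ (p * q) ^ 2 = 1 ∧ p * q ≠ 1 := by
  constructor
  · intro h
    exact or_iff_not_imp_left.2 fun hne => ⟨hp.mul_sq_eq_one hq h hne, hp.mul_ne_one h⟩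
  · rintro (rfl | ⟨h2, h1⟩)
    · obtain ⟨u, hu⟩ := hp.exists_apply_ne
      exact ⟨u, p u, hu.symm, rfl, rfl⟩
    · by_contra h
      have hord : ∀ n : ℕ, Nat.Coprime 2 n → (p * q) ^ n ≠ 1 := fun n hn hpow =>
        h1 (by simpa [hn.gcd_eq_one] using pow_gcd_eq_one.2 ⟨h2, hpow⟩)
      exact (hp.mul_pow_three_or_five hq h).elim (hord 3 (by norm_num)) (hord 5 (by norm_num))

theorem mul_pow_thirty (hp : IsThreeCycle p) (hq : IsThreeCycle q) : (p * q) ^ 30 = 1 := by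
  by_cases h : SharesArc p q
  · rcases eq_or_ne p q with rfl | hne
    · rw [← sq, ← pow_mul]
      exact (pow_mul p 3 20).trans (by rw [hp.pow_three, one_pow])
    · rw [pow_mul (p * q) 2 15, hp.mul_sq_eq_one hq h hne, one_pow]
  · rcases hp.mul_pow_three_or_five hq h with h | h
    · rw [pow_mul (p * q) 3 10, h, one_pow]
    · rw [pow_mul (p * q) 5 6, h, one_pow]

theorem commutatorElement_pow_thirty (hp : IsThreeCycle p) (h : Perm X) : ⁅p, h⁆ ^ 30 = 1 := by
  rw [commutatorElement_def, mul_assoc, mul_assoc, ← mul_assoc h]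
  exact hp.mul_pow_thirty (hp.inv.conj h)

theorem apply_eq_iff_sharesArc (hp : IsThreeCycle p) (hq : IsThreeCycle q) (hr : IsThreeCycle r)
    (hne : p ≠ q) {u v : X} (huv : u ≠ v) (hpu : p u = v) (hqu : q u = v) :
    r u = v ↔ SharesArc p r ∧ SharesArc q r := by
  classical
  refine ⟨fun hru => ⟨⟨u, v, huv, hpu, hru⟩, u, v, huv, hqu, hru⟩, ?_⟩
  rintro ⟨⟨a, b, hab, hpa, hra⟩, c, d, hcd, hqc, hrc⟩
  obtain ⟨w, huw, hvw, rfl⟩ := hp.exists_eq_threeCycle hpu huv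
  obtain ⟨w', huw', hvw', rfl⟩ := hq.exists_eq_threeCycle hqu huv
  obtain ⟨e, hae, hbe, rfl⟩ := hr.exists_eq_threeCycle hra hab
  rw [threeCycle_apply huv huw hvw] at hpa
  rw [threeCycle_apply huv huw' hvw'] at hqc
  rw [threeCycle_apply hab hae hbe] at hrc ⊢
  grind

end IsThreeCycle

theorem threeCycle_mem_FAlt [DecidableEq X] {a b c : X} (hab : a ≠ b) (hac : a ≠ c)
    (hbc : b ≠ c) : threeCycle a b c ∈ FAlt X :=
  (isThreeCycle_threeCycle hab hac hbc).mem_FAlt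

theorem exists_two_cycles_of_not_isThreeCycle {g : Perm X} (hg : g ≠ 1) (hg3 : g ^ 3 = 1)
    (h : ¬ IsThreeCycle g) : ∃ a d, [a, g a, g (g a), d, g d, g (g d)].Nodup := by
  have hggg (x : X) : g (g (g x)) = x := by simpa [pow_succ] using congr($hg3 x)
  obtain ⟨a, ha⟩ : ∃ a, g a ≠ a := by
    by_contra! hfix
    exact hg (Equiv.ext hfix)
  have hinj (x y : X) (h : g x = g y) : x = y := g.injective h
  obtain ⟨d, hd, hda⟩ : ∃ d, g d ≠ d ∧ d ∉ ({a, g a, g (g a)} : Set X) := by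
    by_contra! hd
    refine h (Set.ncard_eq_three.2 ⟨a, g a, g (g a), by grind, by grind, by grind, ?_⟩)
    refine Set.Subset.antisymm hd ?_
    rintro x (rfl | rfl | rfl) <;> simp only [Set.mem_ofPred_eq] <;> grind
  simp only [Set.mem_insert_iff, Set.mem_singleton_iff, not_or] at hda
  exact ⟨a, d, by grind⟩

theorem commutatorElement_apply_eq {g h : Perm X} {x y z t s : X} (hzy : g z = y) (hyx : h y = x)
    (hzt : h z = t) (hts : g t = s) : ⁅g, h⁆ x = s := by
  simp [commutatorElement_def, ← hzy, ← hyx, hzt, hts]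

theorem pow_thirty_ne_one_of_four_orbit {w : Perm X} {x y z t : X} (hx : w x = y) (hy : w y = z)
    (hz : w z = t) (ht : w t = x) (hxz : z ≠ x) : w ^ 30 ≠ 1 := by
  intro h
  have h4 : (w ^ 4) x = x := by simp [pow_succ, hx, hy, hz, ht]
  have h28 : (w ^ 28) x = x := by
    rw [pow_mul w 4 7]
    exact Perm.pow_apply_eq_self_of_apply_eq_self h4 7
  have h30 : (w ^ 2 * w ^ 28) x = x := by rw [← pow_add, h, Perm.one_apply]
  refine hxz ?_
  rwa [Perm.mul_apply, h28, sq, Perm.mul_apply, hx, hy] at h30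

theorem exists_commutatorElement_pow_thirty_ne_one_of_fixed {g : Perm X} {a b c d e i : X}
    (hne : [a, b, c, d, e, i].Nodup) (ha : g a = b) (hb : g b = c) (hd : g d = e) (hi : g i = i) :
    ∃ h ∈ FAlt X, ⁅g, h⁆ ^ 30 ≠ 1 := by
  classical
  simp only [List.nodup_cons, List.mem_cons, List.not_mem_nil, or_false, not_or] at hne
  obtain ⟨had, hab, hdb, hdi, hbi⟩ : a ≠ d ∧ a ≠ b ∧ d ≠ b ∧ d ≠ i ∧ b ≠ i := by grind
  have hp := threeCycle_apply had hab hdb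
  have hq := threeCycle_apply hdb hdi hbi
  -- For `h = (a d)(b i)` the commutator runs `b ↦ c ↦ i ↦ e ↦ b`.
  refine ⟨threeCycle a d b * threeCycle d b i,
    mul_mem (threeCycle_mem_FAlt had hab hdb) (threeCycle_mem_FAlt hdb hdi hbi), ?_⟩
  generalize hh : threeCycle a d b * threeCycle d b i = h
  have happly (x : X) : h x = threeCycle a d b (threeCycle d b i x) := congr($hh.symm x)
  have hha : h a = d := by grind
  have hhb : h b = i := by grind
  have hhc : h c = c := by grind
  have hhd : h d = a := by grind
  have hhe : h e = e := by grind
  have hhi : h i = b := by grind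
  exact pow_thirty_ne_one_of_four_orbit (commutatorElement_apply_eq hi hhi hhi hb)
    (commutatorElement_apply_eq hb hhc hhb hi) (commutatorElement_apply_eq ha hhb hha hd)
    (commutatorElement_apply_eq hd hhe hhd ha) hbi.symm

theorem exists_commutatorElement_pow_thirty_ne_one_of_moved {g : Perm X} {a c d e f i j k : X}
    (hne : [a, c, d, e, f, i, j, k].Nodup) (hc : g c = a) (hd : g d = e) (he : g e = f)
    (hi : g i = j) (hj : g j = k) : ∃ h ∈ FAlt X, ⁅g, h⁆ ^ 30 ≠ 1 := by
  classical
  simp only [List.nodup_cons, List.mem_cons, List.not_mem_nil, or_false, not_or] at hne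
  obtain ⟨hcd, hci, hdi, hij, hie, hje, hka⟩ :
    c ≠ d ∧ c ≠ i ∧ d ≠ i ∧ i ≠ j ∧ i ≠ e ∧ j ≠ e ∧ k ≠ a := by grind
  have hp := threeCycle_apply hcd hci hdi
  have hq := threeCycle_apply hij hie hje
  -- For `h = (c d i j e)` the commutator runs `a ↦ e ↦ k ↦ f ↦ a`.
  refine ⟨threeCycle c d i * threeCycle i j e,
    mul_mem (threeCycle_mem_FAlt hcd hci hdi) (threeCycle_mem_FAlt hij hie hje), ?_⟩
  generalize hh : threeCycle c d i * threeCycle i j e = h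
  have happly (x : X) : h x = threeCycle c d i (threeCycle i j e x) := congr($hh.symm x)
  have hha : h a = a := by grind
  have hhc : h c = d := by grind
  have hhe : h e = c := by grind
  have hhf : h f = f := by grind
  have hhi : h i = j := by grind
  have hhj : h j = e := by grind
  have hhk : h k = k := by grind
  exact pow_thirty_ne_one_of_four_orbit (commutatorElement_apply_eq hc hha hhc hd)
    (commutatorElement_apply_eq hi hhj hhi hj) (commutatorElement_apply_eq hj hhk hhj he)
    (commutatorElement_apply_eq he hhf hhe hc) hka

theorem isThreeCycle_of_commutatorElement_pow_thirty [Infinite X] {g : Perm X} (hg : g ≠ 1)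
    (hg3 : g ^ 3 = 1) (hcomm : ∀ h ∈ FAlt X, ⁅g, h⁆ ^ 30 = 1) : IsThreeCycle g := by
  classical
  by_contra h3
  obtain ⟨a, d, had⟩ := exists_two_cycles_of_not_isThreeCycle hg hg3 h3
  have hggg (x : X) : g (g (g x)) = x := by simpa [pow_succ] using congr($hg3 x)
  obtain ⟨i, hi⟩ := Infinite.exists_notMem_finset ([a, g a, g (g a), d, g d, g (g d)].toFinset)
  have hinj (x y : X) (h : g x = g y) : x = y := g.injective h
  simp only [List.nodup_cons, List.mem_cons, List.not_mem_nil, or_false, not_or,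
    List.mem_toFinset] at had hi
  obtain ⟨h, hh, hne⟩ : ∃ h ∈ FAlt X, ⁅g, h⁆ ^ 30 ≠ 1 := by
    by_cases hgi : g i = i
    · refine exists_commutatorElement_pow_thirty_ne_one_of_fixed (a := a) (d := d) (i := i)
        ?_ rfl rfl rfl hgi
      simp only [List.nodup_cons, List.mem_cons, List.not_mem_nil, or_false, not_or]
      grind
    · refine exists_commutatorElement_pow_thirty_ne_one_of_moved (c := g (g a)) (d := d) (i := i)
        ?_ rfl rfl rfl rfl rfl
      simp only [List.nodup_cons, List.mem_cons, List.not_mem_nil, or_false, not_or]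
      grind
  exact hne (hcomm h hh)

end ThreeCycle

section Isomorphism

variable {X Y : Type*} {G : Subgroup (Perm X)} {H : Subgroup (Perm Y)}

/-- The arcs `(a, b)` of `X` and `(u, v)` of `Y` correspond under `φ` if a 3-cycle of `G` runs
through the former exactly when its image runs through the latter. -/
def ArcsCorrespond (φ : G ≃* H) (a b : X) (u v : Y) : Prop :=
  a ≠ b ∧ u ≠ v ∧
    ∀ g : G, IsThreeCycle (g : Perm X) → ((g : Perm X) a = b ↔ (φ g : Perm Y) u = v)

/-- The points `b` of `X` and `v` of `Y` correspond under `φ` if they are the heads of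
corresponding arcs. -/
def PointsCorrespond (φ : G ≃* H) (b : X) (v : Y) : Prop :=
  ∃ a u, ArcsCorrespond φ a b u v

theorem IsThreeCycle.map [Infinite Y] (hH : FAlt Y ≤ H) (φ : G ≃* H) {g : G}
    (hg : IsThreeCycle (g : Perm X)) : IsThreeCycle (φ g : Perm Y) := by
  have map_pow_eq_one {k : G} {n : ℕ} (hk : (k : Perm X) ^ n = 1) : (φ k : Perm Y) ^ n = 1 := by
    norm_cast at hk ⊢
    rw [← map_pow, hk, map_one]
  refine isThreeCycle_of_commutatorElement_pow_thirty (fun h => hg.ne_one ?_)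
    (map_pow_eq_one hg.pow_three) fun h hh => ?_
  · simpa using h
  · obtain ⟨k, hk⟩ := φ.surjective ⟨h, hH hh⟩
    have := map_pow_eq_one (k := ⁅g, k⁆) (hg.commutatorElement_pow_thirty k)
    rwa [map_commutatorElement, hk] at this

theorem sharesArc_coe_iff {g h : G} (hg : IsThreeCycle (g : Perm X))
    (hh : IsThreeCycle (h : Perm X)) :
    SharesArc (g : Perm X) h ↔ g = h ∨ (g * h) ^ 2 = 1 ∧ g * h ≠ 1 :=
  (hg.sharesArc_iff hh).trans (by norm_cast)

theorem sharesArc_map_iff [Infinite Y] (hH : FAlt Y ≤ H) (φ : G ≃* H) {g h : G}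
    (hg : IsThreeCycle (g : Perm X)) (hh : IsThreeCycle (h : Perm X)) :
    SharesArc (φ g : Perm Y) (φ h) ↔ SharesArc (g : Perm X) h := by
  rw [sharesArc_coe_iff hg hh, sharesArc_coe_iff (hg.map hH φ) (hh.map hH φ), ← map_mul, ← map_pow,
    φ.injective.eq_iff, Ne, EmbeddingLike.map_eq_one_iff, EmbeddingLike.map_eq_one_iff]

theorem exists_isThreeCycle_apply_eq (hG : FAlt X ≤ G) {a b c : X} (hab : a ≠ b) (hac : a ≠ c)
    (hbc : b ≠ c) :
    ∃ g : G, IsThreeCycle (g : Perm X) ∧ (g : Perm X) a = b ∧ (g : Perm X) b = c := by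
  classical
  have happly := threeCycle_apply hab hac hbc
  exact ⟨⟨_, hG (threeCycle_mem_FAlt hab hac hbc)⟩, isThreeCycle_threeCycle hab hac hbc,
    by simp [happly], by simp [happly, hab.symm]⟩

theorem exists_arcsCorrespond [Infinite X] [Infinite Y] (hG : FAlt X ≤ G) (hH : FAlt Y ≤ H)
    (φ : G ≃* H) {a b : X} (hab : a ≠ b) : ∃ u v, ArcsCorrespond φ a b u v := by
  classical
  obtain ⟨x, hx⟩ := Infinite.exists_notMem_finset {a, b}
  obtain ⟨y, hy⟩ := Infinite.exists_notMem_finset {a, b, x}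
  simp only [Finset.mem_insert, Finset.mem_singleton, not_or, ← ne_eq] at hx hy
  obtain ⟨p, hp, hpa, hpb⟩ := exists_isThreeCycle_apply_eq hG hab hx.1.symm hx.2.symm
  obtain ⟨q, hq, hqa, hqb⟩ := exists_isThreeCycle_apply_eq hG hab hy.1.symm hy.2.1.symm
  have hpq : p ≠ q := by
    rintro rfl
    exact hy.2.2 (hqb.symm.trans hpb)
  obtain ⟨u, v, huv, hpu, hqu⟩ := (sharesArc_map_iff hH φ hp hq).2 ⟨a, b, hab, hpa, hqa⟩
  refine ⟨u, v, hab, huv, fun g hg => ?_⟩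
  rw [hp.apply_eq_iff_sharesArc hq hg (Subtype.coe_ne_coe.2 hpq) hab hpa hqa,
    (hp.map hH φ).apply_eq_iff_sharesArc (hq.map hH φ) (hg.map hH φ)
      (Subtype.coe_ne_coe.2 (φ.injective.ne hpq)) huv hpu hqu,
    sharesArc_map_iff hH φ hp hg, sharesArc_map_iff hH φ hq hg]

namespace ArcsCorrespond

variable {φ : G ≃* H} {a b : X} {u v u' v' : Y}

theorem symm [Infinite X] (hG : FAlt X ≤ G) (h : ArcsCorrespond φ a b u v) :
    ArcsCorrespond φ.symm u v a b := by
  refine ⟨h.2.1, h.1, fun k hk => ?_⟩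
  rw [h.2.2 _ (hk.map hG φ.symm), φ.apply_symm_apply]

theorem map (h : ArcsCorrespond φ a b u v) (g : G) :
    ArcsCorrespond φ ((g : Perm X) a) ((g : Perm X) b) ((φ g : Perm Y) u) ((φ g : Perm Y) v) := by
  refine ⟨(g : Perm X).injective.ne h.1, (φ g : Perm Y).injective.ne h.2.1, fun k hk => ?_⟩
  have hconj : IsThreeCycle ((g⁻¹ * k * g : G) : Perm X) := by simpa using hk.conj (g : Perm X)⁻¹
  simpa [Perm.inv_def, Equiv.symm_apply_eq] using h.2.2 _ hconj

theorem left_unique [Infinite X] [Infinite Y] (hG : FAlt X ≤ G) (hH : FAlt Y ≤ H)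
    (h : ArcsCorrespond φ a b u v) (h' : ArcsCorrespond φ a b u' v') : u = u' := by
  classical
  obtain ⟨w, hw⟩ := Infinite.exists_notMem_finset {u, v, u', v'}
  simp only [Finset.mem_insert, Finset.mem_singleton, not_or, ← ne_eq] at hw
  obtain ⟨k, hk, hku, hkv⟩ := exists_isThreeCycle_apply_eq hH h.2.1 hw.1.symm hw.2.1.symm
  have hku' : (k : Perm Y) u' = v' :=
    ((h'.symm hG).2.2 k hk).2 (((h.symm hG).2.2 k hk).1 hku)
  obtain ⟨c, huc, hvc, hkc⟩ := hk.exists_eq_threeCycle hku h.2.1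
  have happly := threeCycle_apply h.2.1 huc hvc
  have hne := h'.2.1
  grind

end ArcsCorrespond

namespace PointsCorrespond

variable {φ : G ≃* H} {b : X} {v v' : Y}

theorem symm [Infinite X] (hG : FAlt X ≤ G) (h : PointsCorrespond φ b v) :
    PointsCorrespond φ.symm v b := by
  obtain ⟨a, u, h⟩ := h
  exact ⟨u, a, h.symm hG⟩

theorem map (h : PointsCorrespond φ b v) (g : G) :
    PointsCorrespond φ ((g : Perm X) b) ((φ g : Perm Y) v) := by
  obtain ⟨a, u, h⟩ := h
  exact ⟨_, _, h.map g⟩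

theorem right_unique [Infinite X] [Infinite Y] (hG : FAlt X ≤ G) (hH : FAlt Y ≤ H)
    (h : PointsCorrespond φ b v) (h' : PointsCorrespond φ b v') : v = v' := by
  classical
  obtain ⟨a, u, h⟩ := h
  obtain ⟨a', u', h'⟩ := h'
  obtain ⟨c, hc⟩ := Infinite.exists_notMem_finset {a, a', b}
  simp only [Finset.mem_insert, Finset.mem_singleton, not_or, ← ne_eq] at hc
  -- Both arcs can be moved onto the arc `(b, c)`, where `left_unique` compares the images of `b`.
  obtain ⟨g, hg, hga, hgb⟩ := exists_isThreeCycle_apply_eq hG h.1 hc.1.symm hc.2.2.symm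
  obtain ⟨g', hg', hga', hgb'⟩ := exists_isThreeCycle_apply_eq hG h'.1 hc.2.1.symm hc.2.2.symm
  have hbc := h.map g
  have hbc' := h'.map g'
  rw [hga, hgb, (h.2.2 g hg).1 hga] at hbc
  rw [hga', hgb', (h'.2.2 g' hg').1 hga'] at hbc'
  exact hbc.left_unique hG hH hbc'

end PointsCorrespond

theorem exists_pointsCorrespond [Infinite X] [Infinite Y] (hG : FAlt X ≤ G) (hH : FAlt Y ≤ H)
    (φ : G ≃* H) (b : X) : ∃ v, PointsCorrespond φ b v := by
  obtain ⟨a, hab⟩ := exists_ne b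
  obtain ⟨u, v, h⟩ := exists_arcsCorrespond hG hH φ hab
  exact ⟨v, a, u, h⟩

theorem exists_equiv_apply_eq [Infinite X] [Infinite Y] (hG : FAlt X ≤ G) (hH : FAlt Y ≤ H)
    (φ : G ≃* H) : ∃ ρ : X ≃ Y, ∀ (g : G) x, ρ ((g : Perm X) x) = (φ g : Perm Y) (ρ x) := by
  choose ρ hρ using exists_pointsCorrespond hG hH φ
  choose σ hσ using exists_pointsCorrespond hH hG φ.symm
  exact ⟨⟨ρ, σ, fun x => (hσ _).right_unique hH hG ((hρ x).symm hG),
    fun y => (hρ _).right_unique hG hH ((hσ y).symm hH)⟩,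
    fun g x => (hρ _).right_unique hG hH ((hρ x).map g)⟩

end Isomorphism

section FixedPoints

variable {X : Type*}

theorem preimage_eq_of_preimage_subset {g : Perm X}
    (hfin : ∀ x, (Set.range fun d : ℤ => (g ^ d) x).Finite) {s : Set X} (h : g ⁻¹' s ⊆ s) :
    g ⁻¹' s = s := by
  refine h.antisymm fun x hx => ?_
  obtain ⟨m, n, hmn, heq⟩ := (hfin x).exists_lt_map_eq_of_forall_mem
    (f := fun n : ℕ => (g ^ n) x) fun n => Set.mem_range.2 ⟨(n : ℤ), by simp⟩
  obtain ⟨k, rfl⟩ := Nat.exists_eq_add_of_lt hmn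
  have hperiod : (g ^ k) (g x) = x := by
    rw [← Perm.mul_apply, ← pow_succ]
    refine (g ^ m).injective ?_
    rw [← Perm.mul_apply, ← pow_add, ← add_assoc, heq]
  have mem_of_pow_apply_mem (j : ℕ) (y : X) (hy : (g ^ j) y ∈ s) : y ∈ s := by
    induction j with
    | zero => exact hy
    | succ j ih => exact ih (h (by rwa [pow_succ'] at hy))
  exact mem_of_pow_apply_mem k (g x) (hperiod.symm ▸ hx)

theorem fixedPoints_conj (τ g : Perm X) :
    fixedPoints (g⁻¹ * τ * g : Perm X) = g ⁻¹' fixedPoints τ := by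
  ext x
  simp [mem_fixedPoints, IsFixedPt, Perm.inv_def, Equiv.symm_apply_eq]

theorem exists_fixedPoints_mul_ssubset {τ : Perm X} (h : (fixedPoints τ).Infinite) :
    ∃ c ∈ FAlt X, fixedPoints (τ * c : Perm X) ⊂ fixedPoints τ ∧
      (fixedPoints (τ * c : Perm X)).Infinite := by
  classical
  obtain ⟨t, ht, htc⟩ := h.exists_subset_card_eq 3
  obtain ⟨a, b, c, hab, hac, hbc, rfl⟩ := Finset.card_eq_three.1 htc
  have ha : τ a = a := ht (by simp)
  have hb : τ b = b := ht (by simp)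
  have hc : τ c = c := ht (by simp)
  have happly := threeCycle_apply hab hac hbc
  have heq : fixedPoints (τ * threeCycle a b c : Perm X) =
      fixedPoints τ \ ({a, b, c} : Finset X) := by
    ext y
    simp only [mem_fixedPoints, IsFixedPt, Perm.mul_apply, Set.mem_sdiff, Finset.mem_coe,
      Finset.mem_insert, Finset.mem_singleton]
    grind
  refine ⟨threeCycle a b c, threeCycle_mem_FAlt hab hac hbc, ?_, ?_⟩
  · rw [heq, Set.sdiff_ssubset_left_iff]
    exact ⟨a, ha, by simp⟩
  · rw [heq]
    exact h.sdiff (Finset.finite_toSet _)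

theorem exists_ssubset_fixedPoints_mul {τ : Perm X} (h : (fixedPoints τ)ᶜ.Infinite) :
    ∃ c ∈ FAlt X, fixedPoints τ ⊂ fixedPoints (τ * c : Perm X) ∧
      (fixedPoints (τ * c : Perm X))ᶜ.Infinite := by
  classical
  obtain ⟨x, hx : τ x ≠ x⟩ := h.nonempty
  generalize hy : τ x = y at hx
  obtain ⟨z, hz : τ z ≠ z, hzxy⟩ := h.exists_notMem_finset {x, y}
  simp only [Finset.mem_insert, Finset.mem_singleton, not_or, ← ne_eq] at hzxy
  have hτy : τ y ≠ y := fun h => hx (τ.injective (h.trans hy.symm))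
  have happly := threeCycle_apply hx hzxy.2.symm hzxy.1.symm
  refine ⟨threeCycle y x z, threeCycle_mem_FAlt hx hzxy.2.symm hzxy.1.symm, ⟨?_, fun hsub => ?_⟩,
    (h.sdiff (Finset.finite_toSet {x, y, z})).mono ?_⟩
  · intro t (ht : τ t = t)
    have : τ (threeCycle y x z t) = t := by grind
    exact this
  · have hmem : y ∈ fixedPoints (τ * threeCycle y x z : Perm X) := by
      simp [mem_fixedPoints, IsFixedPt, happly, hy]
    exact hτy (hsub hmem)
  · rintro t ⟨ht : τ t ≠ t, htxyz⟩
    simp only [Finset.mem_coe, Finset.mem_insert, Finset.mem_singleton, not_or] at htxyz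
    have : τ (threeCycle y x z t) ≠ t := by grind
    exact this

end FixedPoints

section Chains

theorem exists_seq_of_forall_exists {α : Type*} {p : α → Prop} {r : α → α → Prop} {a₀ : α}
    (h₀ : p a₀) (hstep : ∀ a, p a → ∃ b, p b ∧ r a b) : ∃ f : ℕ → α, ∀ n, r (f n) (f (n + 1)) := by
  choose! next hp hr using hstep
  have hpf (n : ℕ) : p (next^[n] a₀) := by
    induction n with
    | zero => exact h₀
    | succ n ih => exact iterate_succ_apply' next n a₀ ▸ hp _ ih
  exact ⟨fun n => next^[n] a₀, fun n => by
    simpa only [iterate_succ_apply'] using hr _ (hpf n)⟩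

theorem infinite_quot_of_strictMono_or_strictAnti {α P : Type*} [PartialOrder P]
    {r : α → α → Prop} (hr : Equivalence r) {F : α → P}
    (hF : ∀ a b, r a b → F b ≤ F a → F b = F a) {f : ℕ → α}
    (hf : StrictMono (F ∘ f) ∨ StrictAnti (F ∘ f)) : Infinite (Quot r) := by
  have hne (m n : ℕ) (hmn : m < n) : ¬ r (f m) (f n) := by
    intro h
    rcases hf with hf | hf
    · exact (hf hmn).ne (hF _ _ (hr.symm h) (hf hmn).le)
    · exact (hf hmn).ne (hF _ _ h (hf hmn).le)
  exact Infinite.of_injective (fun n => Quot.mk r (f n)) <| .of_lt_imp_ne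
    fun m n hmn h => hne m n hmn ((hr.quot_mk_eq_iff _ _).1 h)

end Chains

theorem twistedConj_equivalence {G : Type*} [Group G] (φ : G ≃* G) :
    Equivalence (TwistedConj φ) where
  refl a := ⟨1, by simp⟩
  symm := by
    rintro a b ⟨x, rfl⟩
    exact ⟨x⁻¹, by simp [mul_assoc]⟩
  trans := by
    rintro a b c ⟨x, rfl⟩ ⟨y, rfl⟩
    exact ⟨x * y, by simp [mul_assoc]⟩

theorem exists_strictMono_or_strictAnti_fixedPoints {X : Type*} [Infinite X]
    {G : Subgroup (Perm X)} (hG : FAlt X ≤ G) (τ : Perm X) :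
    ∃ f : ℕ → G, StrictMono (fun n => fixedPoints (τ * f n : Perm X)) ∨
      StrictAnti (fun n => fixedPoints (τ * f n : Perm X)) := by
  let Fix (a : G) : Set X := fixedPoints (τ * a : Perm X)
  by_cases h : (fixedPoints τ).Infinite
  · have hstep (a : G) (ha : (Fix a).Infinite) : ∃ b, (Fix b).Infinite ∧ Fix b < Fix a := by
      obtain ⟨c, hc, hlt, hinf⟩ := exists_fixedPoints_mul_ssubset ha
      lift c to G using hG hc
      rw [mul_assoc, ← Subgroup.coe_mul] at hlt hinf
      exact ⟨a * c, hinf, hlt⟩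
    obtain ⟨f, hf⟩ := exists_seq_of_forall_exists (p := fun a => (Fix a).Infinite) (a₀ := 1)
      (by simpa [Fix] using h) hstep
    exact ⟨f, .inr (strictAnti_nat_of_succ_lt hf)⟩
  · have hstep (a : G) (ha : (Fix a)ᶜ.Infinite) : ∃ b, (Fix b)ᶜ.Infinite ∧ Fix a < Fix b := by
      obtain ⟨c, hc, hlt, hinf⟩ := exists_ssubset_fixedPoints_mul ha
      lift c to G using hG hc
      rw [mul_assoc, ← Subgroup.coe_mul] at hlt hinf
      exact ⟨a * c, hinf, hlt⟩
    obtain ⟨f, hf⟩ := exists_seq_of_forall_exists (p := fun a => (Fix a)ᶜ.Infinite) (a₀ := 1)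
      (by simpa [Fix] using (Set.not_infinite.1 h).infinite_compl) hstep
    exact ⟨f, .inl (strictMono_nat_of_lt_succ hf)⟩

/-- If `G` fully contains `FAlt X` and no element of `G` has an infinite orbit,
then `G` has the `R∞` property. -/
theorem rinfinity_of_no_infinite_orbit {X : Type*} [Infinite X]
    (G : Subgroup (Equiv.Perm X)) (hG : FAlt X ≤ G)
    (horb : ∀ g ∈ G, ∀ x : X, (Set.range fun d : ℤ => (g ^ d) x).Finite) :
    RInfinity ↥G := by
  intro φ
  obtain ⟨ρ, hρ⟩ := exists_equiv_apply_eq hG hG φ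
  obtain ⟨f, hf⟩ := exists_strictMono_or_strictAnti_fixedPoints hG ρ⁻¹
  refine infinite_quot_of_strictMono_or_strictAnti (twistedConj_equivalence φ)
    (F := fun a : G => fixedPoints (ρ⁻¹ * a : Perm X)) ?_ hf
  rintro a _ ⟨x, rfl⟩ hle
  have hφx : (φ x : Perm X) = ρ * x * ρ⁻¹ := by
    ext y
    simp [hρ]
  have hconj : ρ⁻¹ * (((φ x)⁻¹ * a * x : G) : Perm X) = (x : Perm X)⁻¹ * (ρ⁻¹ * a) * x := by
    simp only [Subgroup.coe_mul, Subgroup.coe_inv, hφx]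
    group
  rw [hconj, fixedPoints_conj] at hle ⊢
  exact preimage_eq_of_preimage_subset (horb x x.2) hle
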